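/- Let G be a finite graph with edge weights x and let φ : π₁(G) → S¹ be a unitary character (equivalently, an assignment of φ(e) ∈ S¹ to each oriented edge with φ(ē) = φ(e)^{-1}). Define the twisted Laplacian Δ^φ acting on f ∈ C^{V(G)} by (Δ^φ f)(v) = Σ_{e=(v,w)} x_e (f(v) - f(w)φ(e)). Then det Δ^φ = Σ_{F ∈ F₁(G)} Π_{T ⊂ F} (2 - φ(T) - φ(T)^{-1}) · Π_{e∈F} x_e, where F₁(G) is the set of spanning subgraphs F each of whose connected components T contains exactly one cycle, and φ(T) is the holonomy of φ around the unique cycle of T (with either orientation). -/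

import Mathlib

/- Forman's theorem on the determinant of the twisted discrete Laplacian.

A finite weighted graph is modelled by a finite vertex type `V`, a finite type `ε` of
(unoriented) edges with endpoint maps `src tgt : ε → V` (a chosen reference orientation),
edge weights `x : ε → ℂ`, and a unitary character `φ : ε → ℂ` with `‖φ a‖ = 1` giving the
parallel transport along `a` in the reference orientation (and `(φ a)⁻¹` in the reverse one,
so that φ(ē) = φ(e)⁻¹). -/

noncomputable section
open Classical Finset

/-- The twisted discrete Laplacian `Δ^φ`:
`(Δ^φ f)(v) = Σ_{e=(v,w)} x_e (f v - f w · φ e)`, as a matrix. -/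
def twistedLaplacian {V ε : Type*} [Fintype V] [Fintype ε]
    (src tgt : ε → V) (x φ : ε → ℂ) : Matrix V V ℂ :=
  Matrix.of fun v w =>
    (∑ a : ε, ((if src a = v then x a else 0) + (if tgt a = v then x a else 0)))
        * (if v = w then 1 else 0)
      - ((∑ a : ε, if src a = v ∧ tgt a = w then x a * φ a else 0)
        + (∑ a : ε, if tgt a = v ∧ src a = w then x a * (φ a)⁻¹ else 0))

/-- Two vertices are connected within the subgraph `F ⊆ ε`. -/
def reachIn {V ε : Type*} (src tgt : ε → V) (F : Finset ε) (u w : V) : Prop :=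
  Relation.ReflTransGen
    (fun p q => ∃ a ∈ F, (src a = p ∧ tgt a = q) ∨ (tgt a = p ∧ src a = q)) u w

/-- Vertices of the connected component of `v` in the subgraph `F`. -/
def vertsIn {V ε : Type*} [Fintype V] (src tgt : ε → V) (F : Finset ε) (v : V) : Finset V :=
  Finset.univ.filter (fun w => reachIn src tgt F v w)

/-- Edges of the connected component of `v` in the subgraph `F`. -/
def edgesIn {V ε : Type*} (src tgt : ε → V) (F : Finset ε) (v : V) : Finset ε :=
  F.filter (fun a => reachIn src tgt F v (src a))

/-- `F` spans all vertices of `G` and each of its connected components `T` contains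
exactly one cycle, i.e. `|E(T)| = |V(T)|`; this is the set `F₁(G)`. -/
def isF₁ {V ε : Type*} [Fintype V] (src tgt : ε → V) (F : Finset ε) : Prop :=
  (∀ v, ∃ a ∈ F, src a = v ∨ tgt a = v) ∧
  (∀ v, (edgesIn src tgt F v).card = (vertsIn src tgt F v).card)

/-- One representative vertex per connected component of `F` (the minimal one). -/
def reps {V ε : Type*} [Fintype V] [LinearOrder V] (src tgt : ε → V) (F : Finset ε) :
    Finset V :=
  Finset.univ.filter (fun v => ∀ w, reachIn src tgt F v w → v ≤ w)

/-- `z` is the holonomy of `φ` around a cycle (closed, non-backtracking, visiting pairwise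
distinct vertices) contained in the connected component of `v` in the subgraph `F`.
The cycle is given by edges `c i` traversed in the direction `d i` (true = reference
orientation) for `i = 0, …, n-1`, cyclically. -/
def isCycleHolonomy {V ε : Type*} (src tgt : ε → V) (φ : ε → ℂ)
    (F : Finset ε) (v : V) (z : ℂ) : Prop :=
  ∃ n : ℕ, 0 < n ∧ ∃ c : ℕ → ε, ∃ d : ℕ → Bool,
    (∀ i < n, c i ∈ F) ∧
    (∀ i < n, (if d i then tgt (c i) else src (c i))
      = (if d ((i + 1) % n) then src (c ((i + 1) % n)) else tgt (c ((i + 1) % n)))) ∧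
    (∀ i < n, ∀ j < n,
      (if d i then src (c i) else tgt (c i)) = (if d j then src (c j) else tgt (c j))
        → i = j) ∧
    (∀ i < n, c ((i + 1) % n) = c i → d ((i + 1) % n) = d i) ∧
    reachIn src tgt F v (if d 0 then src (c 0) else tgt (c 0)) ∧
    z = ∏ i ∈ Finset.range n, (if d i then φ (c i) else (φ (c i))⁻¹)

/-!
Writing `D_ψ` for the twisted incidence matrix, the Laplacian factors as
`Δ^φ = (D_{φ⁻¹})ᵀ * diag x * D_φ`, so by Cauchy–Binet its determinant is a sum over edge sets `F`
with `|F| = |V|` of `∏ x` times the product of the minors of `D_{φ⁻¹}` and `D_φ` on `F`. A nonzero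
minor matches each vertex with an incident edge of `F`, which forces `F ∈ F₁(G)`. Conversely, for
`F ∈ F₁(G)`, orient every cycle of `F` and point all other edges towards the cycles. Each vertex
then has exactly one outgoing edge, and up to nonzero row factors the minor becomes `det (1 - N)`
with `N` the weighted matrix of the successor map. Vertices off the cycles contribute `1` and each
cycle contributes `1 - z`, where `z` is its holonomy. The row factors of the two minors cancel, and
`(1 - z⁻¹) * (1 - z) = 2 - z - z⁻¹`.
-/

section CauchyBinet

lemma exists_perm_comp_eq_of_range_eq {m n : Type*} [Finite m] {f τ : m → n}
    (hτ : Function.Injective τ) (h : Set.range f = Set.range τ) :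
    ∃ π : Equiv.Perm m, τ ∘ π = f := by
  have hmem (i : m) : ∃ j, τ j = f i := h.le (Set.mem_range_self i)
  choose g hg using hmem
  have hgsurj : Function.Surjective g := fun j => by
    obtain ⟨i, hi⟩ : τ j ∈ Set.range f := h.ge (Set.mem_range_self j)
    exact ⟨i, hτ ((hg i).trans hi)⟩
  exact ⟨Equiv.ofBijective g (Finite.surjective_iff_bijective.mp hgsurj), funext hg⟩

variable {m n R : Type*} [CommRing R] [Fintype m] [DecidableEq m] [Fintype n]

lemma det_mul_eq_sum_fun (A : Matrix m n R) (B : Matrix n m R) :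
    (A * B).det = ∑ f : m → n, (∏ i, A i (f i)) * (B.submatrix f id).det := by
  have hrows : A * B = fun i => ∑ k, A i k • B k := by
    ext i j
    simp [Matrix.mul_apply, Finset.sum_apply]
  rw [hrows]
  refine (Matrix.detRowAlternating.toMultilinearMap.map_sum fun i k => A i k • B k).trans ?_
  exact Finset.sum_congr rfl fun f _ =>
    Matrix.detRowAlternating.toMultilinearMap.map_smul_univ (fun i => A i (f i)) fun i => B (f i)

variable [DecidableEq n]

lemma sum_image_eq_det_mul_det (A : Matrix m n R) (B : Matrix n m R) {τ : m → n}
    (hτ : Function.Injective τ) :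
    ∑ f : m → n with univ.image f = univ.image τ, (∏ i, A i (f i)) * (B.submatrix f id).det
      = (A.submatrix id τ).det * (B.submatrix τ id).det := by
  rw [← Matrix.det_transpose (A.submatrix id τ), Matrix.det_apply', Finset.sum_mul]
  symm
  refine Finset.sum_bij (fun π _ => τ ∘ π) (fun π _ => ?_)
    (fun π _ π' _ h => Equiv.ext fun i => hτ (congrFun h i)) (fun f hf => ?_) (fun π _ => ?_)
  · rw [mem_filter, ← image_image, image_univ_equiv]
    exact ⟨mem_univ _, rfl⟩
  · obtain ⟨π, hπ⟩ := exists_perm_comp_eq_of_range_eq hτ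
      (by simpa [← coe_inj] using (mem_filter.mp hf).2)
    exact ⟨π, mem_univ _, hπ⟩
  · have hperm := Matrix.det_permute π (B.submatrix τ id)
    rw [Matrix.submatrix_submatrix, Function.id_comp] at hperm
    rw [hperm]
    simp only [Matrix.transpose_apply, Matrix.submatrix_apply, id_eq, Function.comp_apply]
    ring

theorem det_mul_eq_sum_minors (A : Matrix m n R) (B : Matrix n m R) {s : Finset (Finset n)}
    {c : Finset n → R}
    (hs : ∀ f : m → n, (B.submatrix f id).det ≠ 0 → univ.image f ∈ s)
    (hc : ∀ F ∈ s, ∃ τ : m → n, Function.Injective τ ∧ univ.image τ = F ∧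
      (A.submatrix id τ).det * (B.submatrix τ id).det = c F) :
    (A * B).det = ∑ F ∈ s, c F := by
  rw [det_mul_eq_sum_fun, ← sum_filter_of_ne fun f _ hf => hs f (right_ne_zero_of_mul hf),
    ← sum_fiberwise_of_maps_to (t := s) (g := fun f => univ.image f)
      fun f hf => (mem_filter.mp hf).2]
  refine sum_congr rfl fun F hF => ?_
  obtain ⟨τ, hτ, rfl, hτc⟩ := hc F hF
  rw [← hτc, ← sum_image_eq_det_mul_det A B hτ, filter_filter]
  refine sum_congr (filter_congr fun f _ => ?_) fun _ _ => rfl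
  exact ⟨And.right, fun h => ⟨h ▸ hF, h⟩⟩

end CauchyBinet

section Dynamics

variable {V : Type*}

lemma exists_mem_apply_notMem_of_transitive {f : V → V}
    (hf : ∀ u v, ∃ k, f^[k] u = v) {S : Set V} (hS : S.Nonempty) (hS' : S ≠ Set.univ) :
    ∃ v ∈ S, f v ∉ S := by
  by_contra! hclosed
  obtain ⟨u, hu⟩ := hS
  refine hS' (Set.eq_univ_of_forall fun v => ?_)
  obtain ⟨k, rfl⟩ := hf u v
  exact Set.MapsTo.iterate hclosed k hu

lemma exists_rank_of_reflTransGen {r : V → V → Prop} {C : Set V}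
    (h : ∀ v, ∃ c ∈ C, Relation.ReflTransGen r v c) :
    ∃ rank : V → ℕ, ∀ v ∉ C, ∃ u, r v u ∧ rank u < rank v := by
  let pre (S : Set V) : Set V := {v | ∃ u ∈ S, r v u}
  have hpre (v : V) : ∃ k, v ∈ pre^[k] C := by
    obtain ⟨c, hc, hvc⟩ := h v
    induction hvc using Relation.ReflTransGen.head_induction_on with
    | refl => exact ⟨0, hc⟩
    | head hstep _ ih =>
      obtain ⟨k, hk⟩ := ih
      exact ⟨k + 1, by rw [Function.iterate_succ_apply']; exact ⟨_, hk, hstep⟩⟩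
  refine ⟨fun v => Nat.find (hpre v), fun v hv => ?_⟩
  obtain ⟨k, hk⟩ := Nat.exists_eq_succ_of_ne_zero
    (show Nat.find (hpre v) ≠ 0 by simpa [Nat.find_eq_zero] using hv)
  have hspec := Nat.find_spec (hpre v)
  rw [hk, Function.iterate_succ_apply'] at hspec
  obtain ⟨u, hu, hvu⟩ := hspec
  exact ⟨u, hvu, (Nat.lt_succ_of_le (Nat.find_min' (hpre u) hu)).trans_eq hk.symm⟩

end Dynamics

section FunctionMatrix

variable {V R : Type*} [DecidableEq V] [CommRing R]

/-- The matrix of the operator `g ↦ (v ↦ w v * g (f v))`: the weighted adjacency matrix of the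
functional graph of `f`, with the single nonzero entry `w v` of row `v` in column `f v`. -/
def functionMatrix (f : V → V) (w : V → R) : Matrix V V R :=
  Matrix.of fun v => Pi.single (f v) (w v)

lemma functionMatrix_apply (f : V → V) (w : V → R) (v u : V) :
    functionMatrix f w v u = if u = f v then w v else 0 := by
  simp [functionMatrix, Pi.single_apply]

lemma functionMatrix_id_one : functionMatrix (id : V → V) (1 : V → R) = 1 := by
  ext v u
  simp [functionMatrix_apply, Matrix.one_apply, eq_comm]

lemma functionMatrix_neg (f : V → V) (w : V → R) :
    functionMatrix f (-w) = -functionMatrix f w := by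
  ext v u
  simp [functionMatrix, Pi.single_neg]

lemma blockTriangular_one_sub_functionMatrix {α : Type*} [Preorder α] {f : V → V} {b : V → α}
    (hb : ∀ v, b v ≤ b (f v)) (w : V → R) :
    (1 - functionMatrix f w).BlockTriangular b := by
  intro v u huv
  have hne : v ≠ u := by rintro rfl; exact huv.false
  have hne' : u ≠ f v := by rintro rfl; exact (hb v).not_gt huv
  simp [functionMatrix_apply, hne, hne']

lemma toSquareBlockProp_one_sub_functionMatrix {f : V → V} {p : V → Prop}
    (hp : ∀ v, p v → p (f v)) (w : V → R) :
    (1 - functionMatrix f w).toSquareBlockProp p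
      = 1 - functionMatrix (Subtype.map f hp) fun v => w v := by
  ext v u
  simp [Matrix.toSquareBlockProp, functionMatrix_apply, Matrix.one_apply, Subtype.ext_iff]

lemma det_toSquareBlockProp_one_sub_functionMatrix_of_rank_lt {α : Type*} [LinearOrder α]
    {f : V → V} {p : V → Prop} [Fintype {v // p v}] {rank : V → α}
    (hlt : ∀ v, p v → rank (f v) < rank v) (w : V → R) :
    ((1 - functionMatrix f w).toSquareBlockProp p).det = 1 := by
  have hentry (v u : {v // p v}) (hle : rank v ≤ rank u) :
      (1 - functionMatrix f w) v u = (1 : Matrix V V R) v u := by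
    have hne : (u : V) ≠ f v := fun h => (hlt v v.2).not_ge (h ▸ hle)
    simp [functionMatrix_apply, hne]
  have htri : ((1 - functionMatrix f w).toSquareBlockProp p).BlockTriangular
      fun v => OrderDual.toDual (rank v) := by
    intro v u huv
    have hne : (v : V) ≠ u := by rintro h; simp [h] at huv
    exact (hentry v u (OrderDual.toDual_lt_toDual.mp huv).le).trans (Matrix.one_apply_ne hne)
  rw [htri.det]
  refine prod_eq_one fun k _ => ?_
  suffices h : ((1 - functionMatrix f w).toSquareBlockProp p).toSquareBlock
      (fun v => OrderDual.toDual (rank v)) k = 1 by rw [h, Matrix.det_one]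
  ext ⟨v, hv⟩ ⟨u, hu⟩
  refine (hentry v u (OrderDual.toDual.injective (hv.trans hu.symm)).le).trans ?_
  simp [Matrix.one_apply, Subtype.ext_iff]

variable [Fintype V]

lemma det_functionMatrix_eq_prod_mul (f : V → V) (w : V → R) :
    (functionMatrix f w).det = (∏ v, w v) * (functionMatrix f (1 : V → R)).det := by
  rw [← Matrix.det_mul_column]
  congr 1
  ext v u
  simp [functionMatrix_apply]

lemma det_functionMatrix_of_not_injective {f : V → V} (hf : ¬ Function.Injective f) (w : V → R) :
    (functionMatrix f w).det = 0 := by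
  simp only [Function.Injective, not_forall] at hf
  obtain ⟨u, v, huv, hne⟩ := hf
  rw [det_functionMatrix_eq_prod_mul,
    Matrix.det_zero_of_row_eq hne (by ext; simp [functionMatrix_apply, huv]), mul_zero]

lemma det_one_sub_functionMatrix_eq_sum (f : V → V) (w : V → R) :
    (1 - functionMatrix f w).det
      = ∑ S : Finset V, (functionMatrix (S.piecewise f id) (S.piecewise (-w) 1)).det := by
  have hsplit : 1 - functionMatrix f w = functionMatrix f (-w) + functionMatrix id 1 := by
    rw [functionMatrix_id_one, functionMatrix_neg, neg_add_eq_sub]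
  rw [hsplit]
  refine (Matrix.detRowAlternating.toMultilinearMap.map_add_univ _ _).trans
    (sum_congr rfl fun S _ => congrArg Matrix.det ?_)
  ext v u
  by_cases hv : v ∈ S <;> simp [functionMatrix, Finset.piecewise, hv]

lemma det_one_sub_functionMatrix_one [Nonempty V] (f : V → V) :
    (1 - functionMatrix f (1 : V → R)).det = 0 := by
  have hker : (1 - functionMatrix f (1 : V → R)).mulVec 1 = 0 := by
    ext v
    rw [Matrix.sub_mulVec, Matrix.one_mulVec]
    simp [Matrix.mulVec, dotProduct, functionMatrix_apply]
  have hadj := congrArg (Matrix.adjugate (1 - functionMatrix f (1 : V → R))).mulVec hker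
  rw [Matrix.mulVec_mulVec, Matrix.adjugate_mul, Matrix.mulVec_zero] at hadj
  simpa [Matrix.smul_mulVec] using congrFun hadj (Classical.arbitrary V)

theorem det_one_sub_functionMatrix_of_transitive [Nonempty V] {f : V → V}
    (hf : ∀ u v, ∃ k, f^[k] u = v) (w : V → R) :
    (1 - functionMatrix f w).det = 1 - ∏ v, w v := by
  -- A proper nonempty `S` has some `v ∈ S` with `f v ∉ S`: there `f` on `S` collides with `id`
  -- off `S`, so only `S = ∅` and `S = univ` contribute to the expansion.
  have htwo_terms (w : V → R) :
      (1 - functionMatrix f w).det = 1 + (functionMatrix f (-w)).det := by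
    rw [det_one_sub_functionMatrix_eq_sum, Finset.sum_eq_add ∅ univ univ_nonempty.ne_empty.symm]
    · simp [functionMatrix_id_one]
    · rintro S - ⟨hne, hne'⟩
      obtain ⟨v, hv, hfv⟩ := exists_mem_apply_notMem_of_transitive hf (S := S)
        (by simpa [Finset.nonempty_iff_ne_empty] using hne) (by simpa using hne')
      refine det_functionMatrix_of_not_injective (fun hinj => ?_) _
      have hfix : v = f v := hinj (by simp_all)
      exact hfv (hfix ▸ hv)
    all_goals simp
  -- At `w = 1` the left-hand side is singular, which determines the sign of `f`.
  have hsign := htwo_terms 1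
  rw [det_one_sub_functionMatrix_one, det_functionMatrix_eq_prod_mul] at hsign
  rw [htwo_terms, det_functionMatrix_eq_prod_mul]
  simp only [Pi.neg_apply, Pi.one_apply, prod_neg, prod_const_one] at hsign ⊢
  linear_combination (-∏ v, w v) * hsign

lemma det_one_sub_functionMatrix_eq_det_subtype {α : Type*} [LinearOrder α] {f : V → V}
    {p : V → Prop} [Fintype {v // p v}] {rank : V → α} (hp : ∀ v, p v → p (f v))
    (hlt : ∀ v, ¬ p v → rank (f v) < rank v) (w : V → R) :
    (1 - functionMatrix f w).det = (1 - functionMatrix (Subtype.map f hp) fun v => w v).det := by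
  rw [Matrix.twoBlockTriangular_det' _ p,
    det_toSquareBlockProp_one_sub_functionMatrix_of_rank_lt (p := fun v => ¬ p v) hlt, mul_one,
    ← toSquareBlockProp_one_sub_functionMatrix hp]
  · congr!
  intro v hv u hu
  have hne : v ≠ u := by rintro rfl; exact hu hv
  have hne' : u ≠ f v := by rintro rfl; exact hu (hp v hv)
  simp [functionMatrix_apply, hne, hne']

lemma det_one_sub_functionMatrix_eq_prod_fiber {ι : Type*} [DecidableEq ι] {f : V → V} {ρ : V → ι}
    (hρ : ∀ v, ρ (f v) = ρ v) (w : V → R) :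
    (1 - functionMatrix f w).det = ∏ i ∈ univ.image ρ,
      (1 - functionMatrix (Subtype.map f fun v (hv : ρ v = i) => (hρ v).trans hv)
        fun v => w v).det := by
  let : LinearOrder ι := linearOrderOfSTO WellOrderingRel
  rw [(blockTriangular_one_sub_functionMatrix (fun v => (hρ v).ge) w).det]
  refine prod_congr rfl fun i _ => congrArg Matrix.det ?_
  exact toSquareBlockProp_one_sub_functionMatrix (fun v (hv : ρ v = i) => (hρ v).trans hv) w

theorem det_one_sub_functionMatrix_eq_prod {α ι : Type*} [LinearOrder α] [DecidableEq ι]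
    {f : V → V} {C : Finset V} {ρ : V → ι} {rank : V → α} (hC : ∀ v, v ∈ C → f v ∈ C)
    (hlt : ∀ v, v ∉ C → rank (f v) < rank v) (hρ : ∀ v, ρ (f v) = ρ v)
    (htrans : ∀ u ∈ C, ∀ v ∈ C, ρ u = ρ v → ∃ k, f^[k] u = v) (w : V → R) :
    (1 - functionMatrix f w).det = ∏ i ∈ C.image ρ, (1 - ∏ v ∈ C with ρ v = i, w v) := by
  rw [det_one_sub_functionMatrix_eq_det_subtype hC hlt,
    det_one_sub_functionMatrix_eq_prod_fiber (ρ := fun v : C => ρ v) fun v => hρ v]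
  refine prod_congr (by ext; simp) fun i hi => ?_
  obtain ⟨c, hc, rfl⟩ := mem_image.mp hi
  have : Nonempty {v : C // ρ v = ρ c} := ⟨⟨⟨c, hc⟩, rfl⟩⟩
  rw [det_one_sub_functionMatrix_of_transitive]
  · congr 1
    rw [prod_filter, ← prod_coe_sort C fun v => if ρ v = ρ c then w v else 1, ← prod_filter,
      prod_subtype (p := fun v : C => ρ v = ρ c) _ (by simp)]
  · rintro ⟨u, hu⟩ ⟨v, hv⟩
    obtain ⟨k, hk⟩ := htrans u u.2 v v.2 (hu.trans hv.symm)
    refine ⟨k, Subtype.ext (Subtype.ext ?_)⟩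
    rw [← hk]
    exact Function.Semiconj.iterate_right (f := fun v : {v : C // ρ v = ρ c} => (v : V))
      (fun _ => rfl) k _

end FunctionMatrix

section Darts

variable {V ε : Type*} (src tgt : ε → V)

/-- The starting vertex of an oriented edge `e`, encoded as an edge together with a flag which is
`true` for the reference orientation. -/
def dartStart (e : ε × Bool) : V := if e.2 then src e.1 else tgt e.1

/-- The final vertex of an oriented edge. -/
def dartEnd (e : ε × Bool) : V := if e.2 then tgt e.1 else src e.1

/-- The parallel transport along an oriented edge: `ψ` in the reference orientation and its inverse
in the opposite one. -/
def dartWeight {G : Type*} [Inv G] (ψ : ε → G) (e : ε × Bool) : G :=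
  if e.2 then ψ e.1 else (ψ e.1)⁻¹

/-- The oriented edges `e 0, …, e (n - 1)` form a non-backtracking cycle in the component of `v`
in `F`. This is the cycle underlying `isCycleHolonomy`. -/
structure IsDartCycle (F : Finset ε) (v : V) (n : ℕ) (e : ℕ → ε × Bool) : Prop where
  pos : 0 < n
  mem : ∀ i < n, (e i).1 ∈ F
  chain : ∀ i < n, dartEnd src tgt (e i) = dartStart src tgt (e ((i + 1) % n))
  inj : ∀ i < n, ∀ j < n, dartStart src tgt (e i) = dartStart src tgt (e j) → i = j
  no_backtrack : ∀ i < n, (e ((i + 1) % n)).1 = (e i).1 → (e ((i + 1) % n)).2 = (e i).2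
  reach : reachIn src tgt F v (dartStart src tgt (e 0))

variable {src tgt}

lemma isCycleHolonomy.exists_isDartCycle {φ : ε → ℂ} {F : Finset ε} {v : V} {z : ℂ}
    (h : isCycleHolonomy src tgt φ F v z) :
    ∃ n e, IsDartCycle src tgt F v n e ∧ z = ∏ i ∈ range n, dartWeight φ (e i) := by
  obtain ⟨n, hn, c, d, hmem, hchain, hinj, hback, hreach, rfl⟩ := h
  exact ⟨n, fun i => (c i, d i), ⟨hn, hmem, hchain, hinj, hback, hreach⟩, rfl⟩

lemma dartEnd_eq_dartStart_of_ne {e e' : ε × Bool} (hedge : e.1 = e'.1) (hne : e ≠ e') :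
    dartEnd src tgt e = dartStart src tgt e' := by
  obtain ⟨a, _ | _⟩ := e <;> obtain ⟨b, _ | _⟩ := e' <;> simp_all [dartStart, dartEnd]

lemma incident_of_dartStart_eq {e : ε × Bool} {v : V} (h : dartStart src tgt e = v) :
    src e.1 = v ∨ tgt e.1 = v := by
  unfold dartStart at h
  split_ifs at h
  exacts [Or.inl h, Or.inr h]

variable {F : Finset ε}

lemma reachIn.symm {u v : V} (h : reachIn src tgt F u v) : reachIn src tgt F v u := by
  induction h with
  | refl => exact Relation.ReflTransGen.refl
  | tail _ hstep ih =>
    obtain ⟨a, ha, hends⟩ := hstep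
    exact Relation.ReflTransGen.head ⟨a, ha, hends.symm.imp And.symm And.symm⟩ ih

lemma reachIn_dartStart_dartEnd {e : ε × Bool} (he : e.1 ∈ F) :
    reachIn src tgt F (dartStart src tgt e) (dartEnd src tgt e) := by
  refine Relation.ReflTransGen.single ⟨e.1, he, ?_⟩
  unfold dartStart dartEnd
  split <;> simp

lemma reachIn_src_of_incident {a : ε} {v : V} (ha : a ∈ F) (h : src a = v ∨ tgt a = v) :
    reachIn src tgt F v (src a) := by
  obtain rfl | rfl := h
  · exact Relation.ReflTransGen.refl
  · exact Relation.ReflTransGen.single ⟨a, ha, Or.inr ⟨rfl, rfl⟩⟩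

namespace IsDartCycle

variable {v : V} {n : ℕ} {e : ℕ → ε × Bool}

lemma reachIn_dartStart (h : IsDartCycle src tgt F v n e) {i : ℕ} (hi : i < n) :
    reachIn src tgt F v (dartStart src tgt (e i)) := by
  induction i with
  | zero => exact h.reach
  | succ i ih =>
    have hstep := reachIn_dartStart_dartEnd (src := src) (tgt := tgt) (h.mem i (by lia))
    rw [h.chain i (by lia), Nat.mod_eq_of_lt hi] at hstep
    exact (ih (by lia)).trans hstep

lemma iterate_dartStart (h : IsDartCycle src tgt F v n e) {f : V → ε × Bool}
    (hf : ∀ i < n, f (dartStart src tgt (e i)) = e i) {i : ℕ} (hi : i < n) (k : ℕ) :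
    (fun v => dartEnd src tgt (f v))^[k] (dartStart src tgt (e i))
      = dartStart src tgt (e ((i + k) % n)) := by
  induction k with
  | zero => simp [Nat.mod_eq_of_lt hi]
  | succ k ih =>
    have hlt : (i + k) % n < n := Nat.mod_lt _ h.pos
    rw [Function.iterate_succ_apply', ih, hf _ hlt, h.chain _ hlt,
      Nat.mod_add_mod, add_assoc]

end IsDartCycle

end Darts

section UnicyclicSubgraphs

variable {V ε : Type*} {src tgt : ε → V} {F : Finset ε}

lemma mem_edgesIn {v : V} {a : ε} :
    a ∈ edgesIn src tgt F v ↔ a ∈ F ∧ reachIn src tgt F v (src a) := by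
  simp [edgesIn]

variable [Fintype V]

lemma mem_vertsIn {v w : V} : w ∈ vertsIn src tgt F v ↔ reachIn src tgt F v w := by
  simp [vertsIn]

lemma image_vertsIn_subset_edgesIn {τ : V → ε} (hmem : ∀ v, τ v ∈ F)
    (hinc : ∀ v, src (τ v) = v ∨ tgt (τ v) = v) (v : V) :
    (vertsIn src tgt F v).image τ ⊆ edgesIn src tgt F v := by
  refine image_subset_iff.mpr fun w hw => mem_edgesIn.mpr ⟨hmem w, ?_⟩
  exact (mem_vertsIn.mp hw).trans (reachIn_src_of_incident (hmem w) (hinc w))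

lemma isF₁_image_of_injective {τ : V → ε} (hτ : Function.Injective τ)
    (hinc : ∀ v, src (τ v) = v ∨ tgt (τ v) = v) : isF₁ src tgt (univ.image τ) := by
  have hmem (v : V) : τ v ∈ univ.image τ := mem_image_of_mem τ (mem_univ v)
  refine ⟨fun v => ⟨τ v, hmem v, hinc v⟩, fun v => ?_⟩
  rw [← card_image_of_injective _ hτ]
  refine congrArg card (Subset.antisymm (fun a ha => ?_) (image_vertsIn_subset_edgesIn hmem hinc v))
  obtain ⟨haF, hreach⟩ := mem_edgesIn.mp ha
  obtain ⟨w, -, rfl⟩ := mem_image.mp haF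
  have hw := reachIn_src_of_incident (hmem w) (hinc w)
  exact mem_image_of_mem τ (mem_vertsIn.mpr (hreach.trans hw.symm))

lemma isF₁.image_eq (hF : isF₁ src tgt F) {τ : V → ε} (hτ : Function.Injective τ)
    (hmem : ∀ v, τ v ∈ F) (hinc : ∀ v, src (τ v) = v ∨ tgt (τ v) = v) : univ.image τ = F := by
  refine Subset.antisymm (image_subset_iff.mpr fun v _ => hmem v) fun a ha => ?_
  have hedges : (vertsIn src tgt F (src a)).image τ = edgesIn src tgt F (src a) :=
    eq_of_subset_of_card_le (image_vertsIn_subset_edgesIn hmem hinc _)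
      (by rw [card_image_of_injective _ hτ, hF.2])
  have haE : a ∈ edgesIn src tgt F (src a) := mem_edgesIn.mpr ⟨ha, Relation.ReflTransGen.refl⟩
  rw [← hedges] at haE
  exact image_subset_image (subset_univ _) haE

variable [LinearOrder V]

lemma mem_reps {r : V} : r ∈ reps src tgt F ↔ ∀ w, reachIn src tgt F r w → r ≤ w := by
  simp [reps]

/-- The representative in `reps` of the component of `v` in `F`. -/
def componentRep (src tgt : ε → V) (F : Finset ε) (v : V) : V :=
  (vertsIn src tgt F v).min' ⟨v, mem_vertsIn.mpr Relation.ReflTransGen.refl⟩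

lemma reachIn_componentRep (v : V) : reachIn src tgt F v (componentRep src tgt F v) :=
  mem_vertsIn.mp (min'_mem _ _)

lemma componentRep_mem_reps (v : V) : componentRep src tgt F v ∈ reps src tgt F :=
  mem_reps.mpr fun _ hw => min'_le _ _ (mem_vertsIn.mpr ((reachIn_componentRep v).trans hw))

lemma eq_of_mem_reps {r s : V} (hr : r ∈ reps src tgt F) (hs : s ∈ reps src tgt F)
    (h : reachIn src tgt F r s) : r = s :=
  le_antisymm (mem_reps.mp hr s h) (mem_reps.mp hs r h.symm)

lemma componentRep_eq {r v : V} (hr : r ∈ reps src tgt F) (h : reachIn src tgt F r v) :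
    componentRep src tgt F v = r :=
  (eq_of_mem_reps hr (componentRep_mem_reps v) (h.trans (reachIn_componentRep v))).symm

lemma componentRep_eq_of_reachIn {u v : V} (h : reachIn src tgt F u v) :
    componentRep src tgt F v = componentRep src tgt F u :=
  componentRep_eq (componentRep_mem_reps u) ((reachIn_componentRep u).symm.trans h)

end UnicyclicSubgraphs

section CycleOrientation

variable {V ε : Type*} [Fintype V] [LinearOrder V]

/-- The vertices lying on the cycles `e r 0, …, e r (n r - 1)` of the components of `F`. -/
def cycleVerts (src tgt : ε → V) (F : Finset ε) (n : V → ℕ) (e : V → ℕ → ε × Bool) : Finset V :=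
  (reps src tgt F).biUnion fun r => (range (n r)).image fun i => dartStart src tgt (e r i)

/-- A choice of an outgoing oriented edge `f v` of `F` at each vertex `v`, which follows the cycles
`e r` and, away from them, leads towards them: some `rank` decreases along `f`. -/
structure IsCycleOrientation (src tgt : ε → V) (F : Finset ε) (n : V → ℕ)
    (e : V → ℕ → ε × Bool) (f : V → ε × Bool) : Prop where
  isDartCycle : ∀ r, IsDartCycle src tgt F r (n r) (e r)
  dartStart_apply : ∀ v, dartStart src tgt (f v) = v
  mem : ∀ v, (f v).1 ∈ F
  apply_dartStart : ∀ r ∈ reps src tgt F, ∀ i < n r, f (dartStart src tgt (e r i)) = e r i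
  exists_rank : ∃ rank : V → ℕ,
    ∀ v ∉ cycleVerts src tgt F n e, rank (dartEnd src tgt (f v)) < rank v

variable {src tgt : ε → V} {F : Finset ε} {n : V → ℕ} {e : V → ℕ → ε × Bool}

lemma mem_cycleVerts {v : V} : v ∈ cycleVerts src tgt F n e ↔
    ∃ r ∈ reps src tgt F, ∃ i < n r, dartStart src tgt (e r i) = v := by
  simp [cycleVerts]

lemma componentRep_dartStart (he : ∀ r, IsDartCycle src tgt F r (n r) (e r)) {r : V}
    (hr : r ∈ reps src tgt F) {i : ℕ} (hi : i < n r) :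
    componentRep src tgt F (dartStart src tgt (e r i)) = r :=
  componentRep_eq hr ((he r).reachIn_dartStart hi)

lemma image_componentRep_cycleVerts (he : ∀ r, IsDartCycle src tgt F r (n r) (e r)) :
    (cycleVerts src tgt F n e).image (componentRep src tgt F) = reps src tgt F := by
  refine Subset.antisymm (image_subset_iff.mpr fun v _ => componentRep_mem_reps v) fun r hr => ?_
  exact mem_image.mpr ⟨_, mem_cycleVerts.mpr ⟨r, hr, 0, (he r).pos, rfl⟩,
    componentRep_dartStart he hr (he r).pos⟩

lemma filter_componentRep_cycleVerts (he : ∀ r, IsDartCycle src tgt F r (n r) (e r)) {r : V}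
    (hr : r ∈ reps src tgt F) :
    {v ∈ cycleVerts src tgt F n e | componentRep src tgt F v = r}
      = (range (n r)).image fun i => dartStart src tgt (e r i) := by
  ext v
  simp only [mem_filter, mem_cycleVerts, mem_image, mem_range]
  constructor
  · rintro ⟨⟨s, hs, i, hi, rfl⟩, hsr⟩
    obtain rfl : s = r := (componentRep_dartStart he hs hi).symm.trans hsr
    exact ⟨i, hi, rfl⟩
  · rintro ⟨i, hi, rfl⟩
    exact ⟨⟨r, hr, i, hi, rfl⟩, componentRep_dartStart he hr hi⟩

lemma exists_rank_cycleVerts (he : ∀ r, IsDartCycle src tgt F r (n r) (e r)) :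
    ∃ rank : V → ℕ, ∀ v ∉ cycleVerts src tgt F n e, ∃ a : ε × Bool,
      dartStart src tgt a = v ∧ a.1 ∈ F ∧ rank (dartEnd src tgt a) < rank v := by
  have hreach (v : V) :
      ∃ c ∈ (cycleVerts src tgt F n e : Set V), reachIn src tgt F v c := by
    have hcycle := he (componentRep src tgt F v)
    exact ⟨_, mem_cycleVerts.mpr ⟨_, componentRep_mem_reps v, 0, hcycle.pos, rfl⟩,
      (reachIn_componentRep v).trans hcycle.reach⟩
  obtain ⟨rank, hrank⟩ := exists_rank_of_reflTransGen hreach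
  refine ⟨rank, fun v hv => ?_⟩
  obtain ⟨u, ⟨a, ha, ⟨rfl, rfl⟩ | ⟨rfl, rfl⟩⟩, hlt⟩ := hrank v hv
  exacts [⟨(a, true), rfl, ha, hlt⟩, ⟨(a, false), rfl, ha, hlt⟩]

lemma exists_isCycleOrientation (he : ∀ r, IsDartCycle src tgt F r (n r) (e r)) :
    ∃ f, IsCycleOrientation src tgt F n e f := by
  obtain ⟨rank, hrank⟩ := exists_rank_cycleVerts he
  have hchoice (v : V) : ∃ a : ε × Bool, dartStart src tgt a = v ∧ a.1 ∈ F ∧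
      (∀ r ∈ reps src tgt F, ∀ i < n r, dartStart src tgt (e r i) = v → a = e r i) ∧
      (v ∉ cycleVerts src tgt F n e → rank (dartEnd src tgt a) < rank v) := by
    by_cases hv : v ∈ cycleVerts src tgt F n e
    · obtain ⟨r, hr, i, hi, rfl⟩ := mem_cycleVerts.mp hv
      refine ⟨e r i, rfl, (he r).mem i hi, fun s hs j hj h => ?_, fun h => absurd hv h⟩
      obtain rfl : s = r := by
        rw [← componentRep_dartStart he hs hj, h, componentRep_dartStart he hr hi]
      rw [(he s).inj j hj i hi h]
    · obtain ⟨a, hstart, ha, hlt⟩ := hrank v hv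
      exact ⟨a, hstart, ha, fun r hr i hi h => absurd (mem_cycleVerts.mpr ⟨r, hr, i, hi, h⟩) hv,
        fun _ => hlt⟩
  choose f hstart hmem hcycle hlt using hchoice
  exact ⟨f, he, hstart, hmem, fun r hr i hi => hcycle _ r hr i hi rfl, rank, hlt⟩

namespace IsCycleOrientation

variable {f : V → ε × Bool}

lemma dartEnd_eq_of_edge_eq (h : IsCycleOrientation src tgt F n e f) {u v : V} (hne : u ≠ v)
    (hedge : (f u).1 = (f v).1) : dartEnd src tgt (f u) = v := by
  have hdart : f u ≠ f v := fun huv =>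
    hne (by rw [← h.dartStart_apply u, huv, h.dartStart_apply])
  exact (dartEnd_eq_dartStart_of_ne hedge hdart).trans (h.dartStart_apply v)

lemma notMem_cycleVerts_of_edge_eq (h : IsCycleOrientation src tgt F n e f) {u v : V}
    (hne : u ≠ v) (hedge : (f u).1 = (f v).1) : u ∉ cycleVerts src tgt F n e := by
  rw [mem_cycleVerts]
  rintro ⟨r, hr, i, hi, rfl⟩
  have hcycle := h.isDartCycle r
  have hfu := h.apply_dartStart r hr i hi
  have hfv := h.apply_dartStart r hr _ (Nat.mod_lt (i + 1) hcycle.pos)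
  rw [← hcycle.chain i hi, ← hfu, h.dartEnd_eq_of_edge_eq hne hedge] at hfv
  rw [hfu, hfv] at hedge
  have hdart : e r i = e r ((i + 1) % n r) :=
    Prod.ext hedge (hcycle.no_backtrack i hi hedge.symm).symm
  exact hne (by rw [← h.dartStart_apply v, hfv, ← hdart])

lemma injective (h : IsCycleOrientation src tgt F n e f) :
    Function.Injective fun v => (f v).1 := by
  intro u v (hedge : (f u).1 = (f v).1)
  by_contra hne
  obtain ⟨rank, hlt⟩ := h.exists_rank
  have hltu := hlt u (h.notMem_cycleVerts_of_edge_eq hne hedge)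
  have hltv := hlt v (h.notMem_cycleVerts_of_edge_eq (Ne.symm hne) hedge.symm)
  rw [h.dartEnd_eq_of_edge_eq hne hedge] at hltu
  rw [h.dartEnd_eq_of_edge_eq (Ne.symm hne) hedge.symm] at hltv
  exact hltu.asymm hltv

lemma image_eq (h : IsCycleOrientation src tgt F n e f) (hF : isF₁ src tgt F) :
    univ.image (fun v => (f v).1) = F :=
  hF.image_eq h.injective h.mem fun v => incident_of_dartStart_eq (h.dartStart_apply v)

lemma dartEnd_mem_cycleVerts (h : IsCycleOrientation src tgt F n e f) {v : V}
    (hv : v ∈ cycleVerts src tgt F n e) :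
    dartEnd src tgt (f v) ∈ cycleVerts src tgt F n e := by
  obtain ⟨r, hr, i, hi, rfl⟩ := mem_cycleVerts.mp hv
  rw [h.apply_dartStart r hr i hi, (h.isDartCycle r).chain i hi]
  exact mem_cycleVerts.mpr ⟨r, hr, _, Nat.mod_lt _ (h.isDartCycle r).pos, rfl⟩

lemma componentRep_dartEnd (h : IsCycleOrientation src tgt F n e f) (v : V) :
    componentRep src tgt F (dartEnd src tgt (f v)) = componentRep src tgt F v := by
  have hstep := reachIn_dartStart_dartEnd (src := src) (tgt := tgt) (h.mem v)
  rw [h.dartStart_apply] at hstep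
  exact componentRep_eq_of_reachIn hstep

lemma exists_iterate_eq (h : IsCycleOrientation src tgt F n e f) {u v : V}
    (hu : u ∈ cycleVerts src tgt F n e) (hv : v ∈ cycleVerts src tgt F n e)
    (huv : componentRep src tgt F u = componentRep src tgt F v) :
    ∃ k, (fun v => dartEnd src tgt (f v))^[k] u = v := by
  obtain ⟨r, hr, i, hi, rfl⟩ := mem_cycleVerts.mp hu
  obtain ⟨s, hs, j, hj, rfl⟩ := mem_cycleVerts.mp hv
  obtain rfl : r = s := by
    rwa [componentRep_dartStart h.isDartCycle hr hi,
      componentRep_dartStart h.isDartCycle hs hj] at huv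
  refine ⟨n r - i + j, ?_⟩
  rw [(h.isDartCycle r).iterate_dartStart (h.apply_dartStart r hr) hi,
    show i + (n r - i + j) = j + n r by lia, Nat.add_mod_right, Nat.mod_eq_of_lt hj]

theorem det_one_sub_functionMatrix {R : Type*} [CommRing R]
    (h : IsCycleOrientation src tgt F n e f) (w : ε × Bool → R) :
    (1 - functionMatrix (fun v => dartEnd src tgt (f v)) fun v => w (f v)).det
      = ∏ r ∈ reps src tgt F, (1 - ∏ i ∈ range (n r), w (e r i)) := by
  obtain ⟨rank, hlt⟩ := h.exists_rank
  rw [det_one_sub_functionMatrix_eq_prod (fun v => h.dartEnd_mem_cycleVerts) hlt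
    h.componentRep_dartEnd fun u hu v hv => h.exists_iterate_eq hu hv,
    image_componentRep_cycleVerts h.isDartCycle]
  refine prod_congr rfl fun r hr => congrArg (1 - ·) ?_
  rw [filter_componentRep_cycleVerts h.isDartCycle hr,
    prod_image fun i hi j hj =>
      (h.isDartCycle r).inj i (mem_range.mp hi) j (mem_range.mp hj)]
  exact prod_congr rfl fun i hi => congrArg w (h.apply_dartStart r hr i (mem_range.mp hi))

end IsCycleOrientation

end CycleOrientation

section Incidence

variable {V ε K : Type*} [DecidableEq V] [Field K]

/-- The twisted incidence matrix of a graph with parallel transport `ψ`: the row of an edge `a` is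
`δ_{src a} - ψ a • δ_{tgt a}`. -/
def twistedIncidence (src tgt : ε → V) (ψ : ε → K) : Matrix ε V K :=
  Matrix.of fun a => Pi.single (src a) 1 - Pi.single (tgt a) (ψ a)

/-- The factor relating the row of an edge in the twisted incidence matrix to the row
`δ_start - transport • δ_end` of one of its two orientations. -/
def dartFactor (ψ : ε → K) (e : ε × Bool) : K := if e.2 then 1 else -ψ e.1

variable {src tgt : ε → V}

lemma twistedIncidence_apply (ψ : ε → K) (a : ε) (v : V) : twistedIncidence src tgt ψ a v
    = (if src a = v then 1 else 0) - if tgt a = v then ψ a else 0 := by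
  simp [twistedIncidence, Pi.single_apply, eq_comm]

lemma dartFactor_inv_mul_dartFactor {ψ : ε → K} (hψ : ∀ a, ψ a ≠ 0) (e : ε × Bool) :
    dartFactor ψ⁻¹ e * dartFactor ψ e = 1 := by
  unfold dartFactor
  split <;> simp [hψ]

lemma dartWeight_inv (ψ : ε → K) (e : ε × Bool) : dartWeight ψ⁻¹ e = (dartWeight ψ e)⁻¹ := by
  unfold dartWeight
  split <;> simp

lemma dartWeight_ne_zero {ψ : ε → K} (hψ : ∀ a, ψ a ≠ 0) (e : ε × Bool) :
    dartWeight ψ e ≠ 0 := by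
  unfold dartWeight
  split <;> simp [hψ]

lemma twistedIncidence_apply_dart {ψ : ε → K} (hψ : ∀ a, ψ a ≠ 0) (e : ε × Bool) (v : V) :
    twistedIncidence src tgt ψ e.1 v = dartFactor ψ e *
      ((if dartStart src tgt e = v then 1 else 0)
        - if dartEnd src tgt e = v then dartWeight ψ e else 0) := by
  obtain ⟨a, _ | _⟩ := e
  · simp only [twistedIncidence_apply, dartFactor, dartStart, dartEnd, dartWeight,
      Bool.false_eq_true, if_false]
    split_ifs <;> simp [mul_sub, hψ, neg_add_eq_sub]
  · simp [twistedIncidence_apply, dartFactor, dartStart, dartEnd, dartWeight]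

variable [Fintype V]

lemma isF₁_image_of_det_twistedIncidence_ne_zero {ψ : ε → K} {τ : V → ε}
    (h : ((twistedIncidence src tgt ψ).submatrix τ id).det ≠ 0) :
    isF₁ src tgt (univ.image τ) := by
  have hτ : Function.Injective τ := by
    intro u v huv
    by_contra hne
    exact h (Matrix.det_zero_of_row_eq hne (by ext w; simp [huv]))
  rw [Matrix.det_apply'] at h
  obtain ⟨π, -, hπ⟩ := exists_ne_zero_of_sum_ne_zero h
  have hinc (v : V) : src (τ (π v)) = v ∨ tgt (τ (π v)) = v := by
    have hv := prod_ne_zero_iff.mp (right_ne_zero_of_mul hπ) v (mem_univ v)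
    by_contra! hcon
    exact hv (by simp [twistedIncidence_apply, hcon.1, hcon.2])
  have hF := isF₁_image_of_injective (hτ.comp π.injective) hinc
  rwa [← image_image, image_univ_equiv] at hF

lemma det_twistedIncidence_submatrix {ψ : ε → K} (hψ : ∀ a, ψ a ≠ 0) {f : V → ε × Bool}
    (hf : ∀ v, dartStart src tgt (f v) = v) :
    ((twistedIncidence src tgt ψ).submatrix (fun v => (f v).1) id).det
      = (∏ v, dartFactor ψ (f v)) *
        (1 - functionMatrix (fun v => dartEnd src tgt (f v)) fun v => dartWeight ψ (f v)).det := by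
  rw [← Matrix.det_mul_column]
  congr 1
  ext v u
  simp [twistedIncidence_apply_dart hψ (f v), hf, functionMatrix_apply, Matrix.one_apply, eq_comm]

end Incidence

section TwistedLaplacian

variable {V ε K : Type*} [Fintype V] [LinearOrder V] [Field K] {src tgt : ε → V}

lemma IsCycleOrientation.det_twistedIncidence_inv_mul_det {F : Finset ε} {n : V → ℕ}
    {e : V → ℕ → ε × Bool} {f : V → ε × Bool} (h : IsCycleOrientation src tgt F n e f)
    {ψ : ε → K} (hψ : ∀ a, ψ a ≠ 0)
    {z : V → K} (hz : ∀ r, z r = ∏ i ∈ range (n r), dartWeight ψ (e r i)) :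
    ((twistedIncidence src tgt ψ⁻¹).submatrix (fun v => (f v).1) id).det *
        ((twistedIncidence src tgt ψ).submatrix (fun v => (f v).1) id).det
      = ∏ r ∈ reps src tgt F, (2 - z r - (z r)⁻¹) := by
  have hψ' (a : ε) : ψ⁻¹ a ≠ 0 := inv_ne_zero (hψ a)
  rw [det_twistedIncidence_submatrix hψ h.dartStart_apply,
    det_twistedIncidence_submatrix hψ' h.dartStart_apply, mul_mul_mul_comm,
    ← prod_mul_distrib, prod_eq_one fun v _ => dartFactor_inv_mul_dartFactor hψ (f v), one_mul,
    h.det_one_sub_functionMatrix, h.det_one_sub_functionMatrix, ← prod_mul_distrib]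
  refine prod_congr rfl fun r _ => ?_
  have hne : z r ≠ 0 := hz r ▸ prod_ne_zero_iff.mpr fun i _ => dartWeight_ne_zero hψ (e r i)
  simp only [dartWeight_inv, prod_inv_distrib, ← hz r]
  field_simp
  ring

variable [Fintype ε]

theorem det_transpose_mul_diagonal_mul_twistedIncidence (x : ε → K) {ψ : ε → K}
    (hψ : ∀ a, ψ a ≠ 0) {z : Finset ε → V → K}
    (hz : ∀ F, isF₁ src tgt F → ∀ v, ∃ n e, IsDartCycle src tgt F v n e ∧
      z F v = ∏ i ∈ range n, dartWeight ψ (e i)) :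
    ((twistedIncidence src tgt ψ⁻¹).transpose * Matrix.diagonal x * twistedIncidence src tgt ψ).det
      = ∑ F with isF₁ src tgt F,
          (∏ r ∈ reps src tgt F, (2 - z F r - (z F r)⁻¹)) * ∏ a ∈ F, x a := by
  refine det_mul_eq_sum_minors _ _
    (fun τ hτ => by simpa using isF₁_image_of_det_twistedIncidence_ne_zero hτ) fun F hF => ?_
  replace hF : isF₁ src tgt F := by simpa using hF
  choose n e he hze using hz F hF
  obtain ⟨f, hf⟩ := exists_isCycleOrientation he
  refine ⟨fun v => (f v).1, hf.injective, hf.image_eq hF, ?_⟩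
  have hdiag : (((twistedIncidence src tgt ψ⁻¹).transpose * Matrix.diagonal x).submatrix id
      fun v => (f v).1).det
      = (∏ a ∈ F, x a) * ((twistedIncidence src tgt ψ⁻¹).submatrix (fun v => (f v).1) id).det := by
    rw [← hf.image_eq hF, prod_image fun u _ v _ huv => hf.injective huv,
      ← Matrix.det_mul_column, ← Matrix.det_transpose]
    congr 1
    ext v u
    simp [Matrix.mul_diagonal, mul_comm]
  rw [hdiag, mul_assoc, hf.det_twistedIncidence_inv_mul_det hψ hze, mul_comm]

lemma twistedLaplacian_eq_transpose_mul_diagonal_mul (x : ε → ℂ) {φ : ε → ℂ}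
    (hφ : ∀ a, φ a ≠ 0) :
    twistedLaplacian src tgt x φ = (twistedIncidence src tgt φ⁻¹).transpose *
      Matrix.diagonal x * twistedIncidence src tgt φ := by
  ext v w
  rw [Matrix.mul_apply]
  simp only [twistedLaplacian, Matrix.of_apply, Matrix.mul_diagonal, Matrix.transpose_apply,
    twistedIncidence_apply, Pi.inv_apply]
  rw [sum_mul, ← sum_add_distrib, ← sum_sub_distrib]
  refine sum_congr rfl fun a _ => ?_
  split_ifs <;> grind

end TwistedLaplacian

theorem forman_determinant_twisted_laplacian_general
    {V ε : Type*} [Fintype V] [LinearOrder V] [Fintype ε]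
    (src tgt : ε → V) (x φ : ε → ℂ) (hφ : ∀ a, φ a ≠ 0)
    (hol : Finset ε → V → ℂ)
    (hhol : ∀ F : Finset ε, isF₁ src tgt F → ∀ v : V,
      isCycleHolonomy src tgt φ F v (hol F v)) :
    (twistedLaplacian src tgt x φ).det
      = ∑ F : Finset ε,
          if isF₁ src tgt F then
            (∏ v ∈ reps src tgt F, (2 - hol F v - (hol F v)⁻¹)) * ∏ a ∈ F, x a
          else 0 := by
  rw [twistedLaplacian_eq_transpose_mul_diagonal_mul x hφ, ← sum_filter,
    det_transpose_mul_diagonal_mul_twistedIncidence x hφ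
      fun F hF v => (hhol F hF v).exists_isDartCycle]

/-- **Forman's theorem**: `det Δ^φ = Σ_{F ∈ F₁(G)} Π_{T ⊆ F} (2 - φ(T) - φ(T)⁻¹) · x(F)`,
where the product is over the connected components `T` of `F` and `φ(T)` is the holonomy
of `φ` around the unique cycle of `T`. -/
theorem forman_determinant_twisted_laplacian
    {V ε : Type*} [Fintype V] [LinearOrder V] [Fintype ε]
    (src tgt : ε → V) (x φ : ε → ℂ) (hφ : ∀ a, ‖φ a‖ = 1)
    (hol : Finset ε → V → ℂ)
    (hhol : ∀ F : Finset ε, isF₁ src tgt F → ∀ v : V,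
      isCycleHolonomy src tgt φ F v (hol F v)) :
    (twistedLaplacian src tgt x φ).det
      = ∑ F : Finset ε,
          if isF₁ src tgt F then
            (∏ v ∈ reps src tgt F, (2 - hol F v - (hol F v)⁻¹)) * ∏ a ∈ F, x a
          else 0 :=
  forman_determinant_twisted_laplacian_general src tgt x φ
    (fun a h => by simpa [h] using hφ a) hol hhol

end
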